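/- Let 0<θ≤q<∞ and let {t_k}_{k∈ℤ} be a q-admissible weight sequence satisfying: there exists C>0 such that M_{Q,q}(t_k)·M_{Q,σ₁}(t_k^{-1}) ≤ C for every k∈ℤ and every cube Q, where σ₁ = θ·(q/θ)′. Set t_{k,m,q} := ‖t_k‖_{L_q(Q_{k,m})}. Then a complex sequence λ = {λ_{k,m}}_{k∈ℤ,m∈ℤ^n} belongs to ḟ_{∞,q}(ℝ^n,{t_k}) if and only if for each dyadic cube Q_{k,m} there is a measurable subset E_{Q_{k,m}} ⊂ Q_{k,m} with |E_{Q_{k,m}}| > |Q_{k,m}|/2 such that ‖(Σ_{k∈ℤ}Σ_{m∈ℤ^n} 2^{knq(1/2+1/q)} t_{k,m,q}^q |λ_{k,m}|^q χ_{E_{Q_{k,m}}})^{1/q}‖_{L_∞(ℝ^n)} < ∞. Moreover the infimum of this L_∞ expression over all such collections {E_{Q_{k,m}}} is comparable to ‖λ | ḟ_{∞,q}(ℝ^n,{t_k})‖, with constants independent of λ. The same holds with 1/2 replaced by any fixed 0<ε<1. -/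

import Mathlib

/-!
Write `a_{k,m}` for the average over `Q_{k,m}` of `2^{knq/2} t_k^q |λ_{k,m}|^q`. Since a dyadic cube
`Q` of a later generation is either contained in a given dyadic cube `P` or disjoint from it, the
`q`-th power of the norm of `λ` is `sup_P |P|⁻¹ ∫_P G_j` (`fInftyNorm_eq`), where `P` has
generation `j` and `G_j = Σ_{k ≥ j} Σ_m a_{k,m} χ_{Q_{k,m}}` is the tail, while the `L_∞`-expression
is `‖Σ_{k,m} a_{k,m} χ_{E_{k,m}}‖_∞`. The statement thus becomes a characterization of Carleson
sequences, in which the weights no longer appear.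

* If the `E_{k,m}` have relative measure greater than `ε`, then replacing `Q_{k,m}` by `E_{k,m}`
  inside `∫_P G_j` costs at most a factor `ε⁻¹`, which bounds the norm by the `L_∞`-expression
  (`eps_mul_lintegral_tail_le`).
* Conversely, let `N` be the `q`-th power of the norm and let `E_{k,m}` be the set of `x ∈ Q_{k,m}`
  with `G_k(x) ≤ 2(1-ε)⁻¹ N`. By Chebyshev's inequality its relative measure exceeds `ε`
  (`goodSets_lowSet`). At a fixed point `x` the generations `k` with `x ∈ E_{k,m}` for some `m` all
  satisfy `G_k(x) ≤ 2(1-ε)⁻¹ N`, so finite partial sums of `Σ a_{k,m} χ_{E_{k,m}}(x)` are at most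
  the tail at their smallest generation, hence at most `2(1-ε)⁻¹ N` (`tsum_lowSet_le`).
-/

open MeasureTheory ENNReal
noncomputable section

abbrev Rn (n : ℕ) := Fin n → ℝ

def cube {n : ℕ} (a : Rn n) (h : ℝ) : Set (Rn n) :=
  {x | ∀ i, a i ≤ x i ∧ x i < a i + h}

/-- The dyadic cube `Q_{k,m} = 2^{-k}([0,1)^n + m)`. -/
def dyadic (n : ℕ) (k : ℤ) (m : Fin n → ℤ) : Set (Rn n) :=
  {x | ∀ i, (m i : ℝ) * (2:ℝ) ^ (-k) ≤ x i ∧ x i < ((m i : ℝ) + 1) * (2:ℝ) ^ (-k)}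

/-- `M_{Q,s}(f)`, the `s`-average of `f` over `Q` (essential supremum if `s = ∞`). -/
def avgE {n : ℕ} (Q : Set (Rn n)) (s : ℝ≥0∞) (f : Rn n → ℝ≥0∞) : ℝ≥0∞ :=
  if s = ∞ then essSup f (volume.restrict Q)
  else ((volume Q)⁻¹ * ∫⁻ x in Q, f x ^ s.toReal) ^ (1 / s.toReal)

/-- The `L_p`-norm on a set `Q` (of an `ℝ≥0∞`-valued function). -/
def lpOn {n : ℕ} (Q : Set (Rn n)) (p : ℝ≥0∞) (f : Rn n → ℝ≥0∞) : ℝ≥0∞ :=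
  if p = ∞ then essSup f (volume.restrict Q)
  else (∫⁻ x in Q, f x ^ p.toReal) ^ (1 / p.toReal)

/-- The conjugate exponent `r′` of `r ∈ ℝ≥0∞`. -/
def econj (r : ℝ≥0∞) : ℝ≥0∞ :=
  if r = 1 then ∞ else if r = ∞ then 1 else ENNReal.ofReal (r.toReal / (r.toReal - 1))

def IsWeight {n : ℕ} (γ : Rn n → ℝ≥0∞) : Prop :=
  Measurable γ ∧ (∀ᵐ x, 0 < γ x ∧ γ x < ∞) ∧
    ∀ (a : Rn n) (h : ℝ), 0 < h → ∫⁻ x in cube a h, γ x < ∞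

def PAdmissible (n : ℕ) (p : ℝ≥0∞) (t : ℤ → Rn n → ℝ≥0∞) : Prop :=
  (∀ k, IsWeight (t k)) ∧
    ∀ (k : ℤ) (a : Rn n) (h : ℝ), 0 < h → lpOn (cube a h) p (t k) < ∞

/-- The quasi-norm of the sequence space `ḟ_{∞,q}(ℝ^n, {t_k})`. -/
def fInftyNorm (n : ℕ) (q : ℝ) (t : ℤ → Rn n → ℝ≥0∞) (lam : ℤ → (Fin n → ℤ) → ℂ) : ℝ≥0∞ :=
  ⨆ (j : ℤ) (m₀ : Fin n → ℤ),
    ((volume (dyadic n j m₀))⁻¹ *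
      ∫⁻ x in dyadic n j m₀,
        ∑' (k : {k : ℤ // j ≤ k}) (m : Fin n → ℤ),
          (2:ℝ≥0∞) ^ ((((k:ℤ):ℝ) * n) * q / 2) * t (k:ℤ) x ^ q * (‖lam (k:ℤ) m‖₊ : ℝ≥0∞) ^ q *
            (dyadic n (k:ℤ) m).indicator (fun _ => (1:ℝ≥0∞)) x) ^ (1 / q)

/-- The property that `E` is an admissible collection of subsets: `E_{Q_{k,m}} ⊆ Q_{k,m}`
is measurable with `|E_{Q_{k,m}}| > ε|Q_{k,m}|`. -/
def GoodSets (n : ℕ) (ε : ℝ) (E : ℤ → (Fin n → ℤ) → Set (Rn n)) : Prop :=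
  ∀ (k : ℤ) (m : Fin n → ℤ), E k m ⊆ dyadic n k m ∧ MeasurableSet (E k m) ∧
    ENNReal.ofReal ε * volume (dyadic n k m) < volume (E k m)

/-- The `L_∞`-expression attached to a collection `E` of subsets of the dyadic cubes:
`‖(Σ_{k,m} 2^{knq(1/2+1/q)} t_{k,m,q}^q |λ_{k,m}|^q χ_{E_{Q_{k,m}}})^{1/q}‖_{L_∞}`. -/
def eNormOf (n : ℕ) (q : ℝ) (t : ℤ → Rn n → ℝ≥0∞) (E : ℤ → (Fin n → ℤ) → Set (Rn n))
    (lam : ℤ → (Fin n → ℤ) → ℂ) : ℝ≥0∞ :=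
  essSup (fun x =>
    (∑' (k : ℤ) (m : Fin n → ℤ),
      (2:ℝ≥0∞) ^ (((k:ℝ) * n) * q * (1/2 + 1/q)) *
        lpOn (dyadic n k m) (ENNReal.ofReal q) (t k) ^ q * (‖lam k m‖₊ : ℝ≥0∞) ^ q *
        (E k m).indicator (fun _ => (1:ℝ≥0∞)) x) ^ (1 / q)) volume

/-- Two dyadic cubes are nested as soon as they meet. -/
lemma dyadic_nested {n : ℕ} {j k : ℤ} (hjk : j ≤ k) (m₀ m : Fin n → ℤ) :
    dyadic n k m ⊆ dyadic n j m₀ ∨ dyadic n k m ∩ dyadic n j m₀ = ∅ := by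
  rcases Set.eq_empty_or_nonempty (dyadic n k m ∩ dyadic n j m₀) with h | ⟨x, hxQ, hxP⟩
  · exact Or.inr h
  refine Or.inl fun y hy i => ?_
  obtain ⟨d, hd⟩ := Int.eq_ofNat_of_zero_le (sub_nonneg.2 hjk)
  have hs : (0:ℝ) < (2:ℝ) ^ (-k) := by positivity
  have e : (2:ℝ) ^ (-j) = ((2 ^ d : ℤ) : ℝ) * (2:ℝ) ^ (-k) := by
    have : -j = (d : ℤ) + -k := by omega
    rw [this, zpow_add₀ (by norm_num)]
    push_cast
    rw [zpow_natCast]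
  obtain ⟨h1, h2⟩ := hxQ i
  obtain ⟨h3, h4⟩ := hxP i
  obtain ⟨h5, h6⟩ := hy i
  rw [e, ← mul_assoc] at h3 h4
  rw [e, ← mul_assoc, ← mul_assoc]
  have a1 : m₀ i * 2 ^ d < m i + 1 := by
    have := lt_of_mul_lt_mul_right (h3.trans_lt h2) hs.le
    exact_mod_cast this
  have a2 : m i < (m₀ i + 1) * 2 ^ d := by
    have := lt_of_mul_lt_mul_right (h1.trans_lt h4) hs.le
    exact_mod_cast this
  have b1 : (m₀ i : ℝ) * ((2 ^ d : ℤ) : ℝ) ≤ m i := by exact_mod_cast Int.lt_add_one_iff.1 a1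
  have b2 : (m i : ℝ) + 1 ≤ ((m₀ i : ℝ) + 1) * ((2 ^ d : ℤ) : ℝ) := by
    exact_mod_cast Int.add_one_le_iff.2 a2
  exact ⟨(mul_le_mul_of_nonneg_right b1 hs.le).trans h5,
    h6.trans_le (mul_le_mul_of_nonneg_right b2 hs.le)⟩

lemma dyadic_eq_pi (n : ℕ) (k : ℤ) (m : Fin n → ℤ) :
    dyadic n k m = Set.univ.pi fun i =>
      Set.Ico ((m i : ℝ) * (2:ℝ) ^ (-k)) (((m i : ℝ) + 1) * (2:ℝ) ^ (-k)) := by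
  ext x; simp [dyadic, Set.mem_pi]

lemma measurableSet_dyadic (n : ℕ) (k : ℤ) (m : Fin n → ℤ) : MeasurableSet (dyadic n k m) := by
  rw [dyadic_eq_pi]
  exact MeasurableSet.univ_pi fun i => measurableSet_Ico

lemma volume_dyadic (n : ℕ) (k : ℤ) (m : Fin n → ℤ) :
    volume (dyadic n k m) = (2:ℝ≥0∞) ^ (-((k:ℝ) * n)) := by
  rw [dyadic_eq_pi, Real.volume_pi_Ico]
  have : ∀ i : Fin n, ENNReal.ofReal (((m i : ℝ) + 1) * (2:ℝ) ^ (-k) - (m i : ℝ) * (2:ℝ) ^ (-k))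
      = (2:ℝ≥0∞) ^ (-(k:ℝ)) := by
    intro i
    rw [show ((m i : ℝ) + 1) * (2:ℝ) ^ (-k) - (m i : ℝ) * (2:ℝ) ^ (-k) = (2:ℝ) ^ (-(k:ℝ)) by
      rw [← Int.cast_neg, Real.rpow_intCast]; ring]
    rw [← ENNReal.ofReal_rpow_of_pos (by norm_num)]
    simp
  simp only [this, Finset.prod_const, Finset.card_univ, Fintype.card_fin]
  rw [← ENNReal.rpow_natCast, ← ENNReal.rpow_mul]
  congr 1; ring

lemma volume_dyadic_ne_zero (n : ℕ) (k : ℤ) (m : Fin n → ℤ) : volume (dyadic n k m) ≠ 0 := by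
  rw [volume_dyadic]; exact (ENNReal.rpow_pos (by norm_num) (by norm_num)).ne'

lemma volume_dyadic_ne_top (n : ℕ) (k : ℤ) (m : Fin n → ℤ) : volume (dyadic n k m) ≠ ∞ := by
  rw [volume_dyadic]; exact ENNReal.rpow_ne_top_of_ne_zero (by norm_num) (by norm_num)

/-- The coefficient `2^{knq(1/2+1/q)} t_{k,m,q}^q |λ_{k,m}|^q`, that is, the average over
`Q_{k,m}` of `2^{knq/2} t_k^q |λ_{k,m}|^q`. -/
def coef (n : ℕ) (q : ℝ) (t : ℤ → Rn n → ℝ≥0∞) (lam : ℤ → (Fin n → ℤ) → ℂ)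
    (k : ℤ) (m : Fin n → ℤ) : ℝ≥0∞ :=
  (2:ℝ≥0∞) ^ (((k:ℝ) * n) * q * (1/2 + 1/q)) *
    lpOn (dyadic n k m) (ENNReal.ofReal q) (t k) ^ q * (‖lam k m‖₊ : ℝ≥0∞) ^ q

lemma coef_mul_volume {n : ℕ} {q : ℝ} (hq : 0 < q) (t : ℤ → Rn n → ℝ≥0∞)
    (ht : ∀ k, Measurable (t k)) (lam : ℤ → (Fin n → ℤ) → ℂ) (k : ℤ) (m : Fin n → ℤ) :
    coef n q t lam k m * volume (dyadic n k m) =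
      ∫⁻ x in dyadic n k m,
        (2:ℝ≥0∞) ^ (((k:ℝ) * n) * q / 2) * t k x ^ q * (‖lam k m‖₊ : ℝ≥0∞) ^ q := by
  have hm : Measurable fun x => t k x ^ q := (ht k).pow_const q
  rw [lintegral_mul_const _ (hm.const_mul _), lintegral_const_mul _ hm]
  have h1 : lpOn (dyadic n k m) (ENNReal.ofReal q) (t k) ^ q = ∫⁻ x in dyadic n k m, t k x ^ q := by
    rw [lpOn, if_neg ENNReal.ofReal_ne_top, ENNReal.toReal_ofReal hq.le, ← ENNReal.rpow_mul,
      one_div_mul_cancel hq.ne', ENNReal.rpow_one]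
  rw [coef, h1, volume_dyadic]
  have h2 : (2:ℝ≥0∞) ^ (((k:ℝ) * n) * q / 2) =
      (2:ℝ≥0∞) ^ (((k:ℝ) * n) * q * (1/2 + 1/q)) * (2:ℝ≥0∞) ^ (-((k:ℝ) * n)) := by
    rw [← ENNReal.rpow_add _ _ (by norm_num) (by norm_num)]
    congr 1; field_simp; ring
  rw [h2]; ring

/-- Termwise comparison of integrals over `P` passes to the double sum over generations `k ≥ j`. -/
lemma lintegral_tsum_mono {n : ℕ} {j : ℤ} (P : Set (Rn n))
    (f g : ℤ → (Fin n → ℤ) → Rn n → ℝ≥0∞)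
    (hf : ∀ k m, Measurable (f k m)) (hg : ∀ k m, Measurable (g k m))
    (h : ∀ k m, j ≤ k → ∫⁻ x in P, f k m x ≤ ∫⁻ x in P, g k m x) :
    ∫⁻ x in P, ∑' (k : {k : ℤ // j ≤ k}) (m : Fin n → ℤ), f k m x ≤
      ∫⁻ x in P, ∑' (k : {k : ℤ // j ≤ k}) (m : Fin n → ℤ), g k m x := by
  rw [lintegral_tsum fun k : {k : ℤ // j ≤ k} => (Measurable.tsum fun m => hf k m).aemeasurable,
    lintegral_tsum fun k : {k : ℤ // j ≤ k} => (Measurable.tsum fun m => hg k m).aemeasurable]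
  refine ENNReal.tsum_le_tsum fun k => ?_
  rw [lintegral_tsum fun m => (hf k m).aemeasurable, lintegral_tsum fun m => (hg k m).aemeasurable]
  exact ENNReal.tsum_le_tsum fun m => h k m k.2

lemma setLIntegral_mul_indicator {n : ℕ} {P Q : Set (Rn n)} (hQ : MeasurableSet Q)
    (f : Rn n → ℝ≥0∞) :
    ∫⁻ x in P, f x * Q.indicator (fun _ => (1:ℝ≥0∞)) x = ∫⁻ x in Q ∩ P, f x := by
  have : (fun x => f x * Q.indicator (fun _ => (1:ℝ≥0∞)) x) = Q.indicator f := by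
    funext x
    by_cases hx : x ∈ Q <;> simp [hx]
  rw [this, lintegral_indicator hQ, Measure.restrict_restrict hQ]

/-- The tail `Σ_{k ≥ j} Σ_m a_{k,m} χ_{Q_{k,m}}`. Restricted to a dyadic cube `P` of generation `j`
it is the sum over the dyadic subcubes of `P`. -/
def tail {n : ℕ} (a : ℤ → (Fin n → ℤ) → ℝ≥0∞) (j : ℤ) (x : Rn n) : ℝ≥0∞ :=
  ∑' (k : {k : ℤ // j ≤ k}) (m : Fin n → ℤ),
    a k m * (dyadic n k m).indicator (fun _ => (1:ℝ≥0∞)) x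

lemma measurable_indicator_one {n : ℕ} {Q : Set (Rn n)} (hQ : MeasurableSet Q) :
    Measurable (Q.indicator fun _ => (1:ℝ≥0∞)) := measurable_const.indicator hQ

lemma measurable_tail {n : ℕ} (a : ℤ → (Fin n → ℤ) → ℝ≥0∞) (j : ℤ) : Measurable (tail a j) :=
  Measurable.tsum fun k => Measurable.tsum fun m =>
    (measurable_indicator_one (measurableSet_dyadic n k m)).const_mul _

/-- Averaging `t_k^q` over each cube `Q_{k,m}` does not change the integral over a dyadic cube of
an earlier generation, so the weights enter the norm only through their means. -/
lemma fInftyNorm_eq {n : ℕ} {q : ℝ} (hq : 0 < q) (t : ℤ → Rn n → ℝ≥0∞)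
    (ht : ∀ k, Measurable (t k)) (lam : ℤ → (Fin n → ℤ) → ℂ) :
    fInftyNorm n q t lam = ⨆ (j : ℤ) (m₀ : Fin n → ℤ), ((volume (dyadic n j m₀))⁻¹ *
      ∫⁻ x in dyadic n j m₀, tail (coef n q t lam) j x) ^ (1 / q) := by
  rw [fInftyNorm]
  congr 1; funext j; congr 1; funext m₀; congr 2
  have hf : ∀ (k : ℤ) (m : Fin n → ℤ), Measurable fun x : Rn n =>
      (2:ℝ≥0∞) ^ ((((k:ℤ):ℝ) * n) * q / 2) * t k x ^ q * (‖lam k m‖₊ : ℝ≥0∞) ^ q *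
        (dyadic n k m).indicator (fun _ => (1:ℝ≥0∞)) x := fun k m =>
    ((((ht k).pow_const q).const_mul _).mul_const _).mul
      (measurable_indicator_one (measurableSet_dyadic n k m))
  have hg : ∀ (k : ℤ) (m : Fin n → ℤ), Measurable fun x : Rn n =>
      coef n q t lam k m * (dyadic n k m).indicator (fun _ => (1:ℝ≥0∞)) x := fun k m =>
    (measurable_indicator_one (measurableSet_dyadic n k m)).const_mul _
  have key : ∀ (k : ℤ) (m : Fin n → ℤ), j ≤ k →
      ∫⁻ x in dyadic n j m₀, (2:ℝ≥0∞) ^ ((((k:ℤ):ℝ) * n) * q / 2) * t k x ^ q *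
        (‖lam k m‖₊ : ℝ≥0∞) ^ q * (dyadic n k m).indicator (fun _ => (1:ℝ≥0∞)) x =
      ∫⁻ x in dyadic n j m₀,
        coef n q t lam k m * (dyadic n k m).indicator (fun _ => (1:ℝ≥0∞)) x := by
    intro k m hk
    rw [setLIntegral_mul_indicator (measurableSet_dyadic n k m),
      setLIntegral_mul_indicator (measurableSet_dyadic n k m)]
    rcases dyadic_nested hk m₀ m with h | h
    · rw [Set.inter_eq_left.2 h, ← coef_mul_volume hq t ht, setLIntegral_const]
    · simp [h]
  exact le_antisymm (lintegral_tsum_mono _ _ _ hf hg fun k m hk => (key k m hk).le)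
    (lintegral_tsum_mono _ _ _ hg hf fun k m hk => (key k m hk).ge)

/-- An almost everywhere bound `M` for `Σ a_{k,m} χ_{E_{k,m}}` bounds the mean of the tail over each
dyadic cube by `ε⁻¹ M`, since `ε |Q_{k,m}| ≤ |E_{k,m}|`. -/
lemma eps_mul_lintegral_tail_le {n : ℕ} {ε : ℝ} (a : ℤ → (Fin n → ℤ) → ℝ≥0∞)
    {E : ℤ → (Fin n → ℤ) → Set (Rn n)} (hE : GoodSets n ε E) {M : ℝ≥0∞}
    (hM : ∀ᵐ x : Rn n, ∑' (k : ℤ) (m : Fin n → ℤ),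
      a k m * (E k m).indicator (fun _ => (1:ℝ≥0∞)) x ≤ M) (j : ℤ) (m₀ : Fin n → ℤ) :
    ENNReal.ofReal ε * ∫⁻ x in dyadic n j m₀, tail a j x ≤ M * volume (dyadic n j m₀) := by
  have hi : ∀ (k : ℤ) (m : Fin n → ℤ), Measurable ((dyadic n k m).indicator
    fun _ => (1:ℝ≥0∞)) := fun k m => measurable_indicator_one (measurableSet_dyadic n k m)
  calc ENNReal.ofReal ε * ∫⁻ x in dyadic n j m₀, tail a j x
      = ∫⁻ x in dyadic n j m₀, ∑' (k : {k : ℤ // j ≤ k}) (m : Fin n → ℤ),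
          ENNReal.ofReal ε * a k m * (dyadic n k m).indicator (fun _ => (1:ℝ≥0∞)) x := by
        rw [← lintegral_const_mul _ (measurable_tail a j)]
        simp only [tail, ← ENNReal.tsum_mul_left, mul_assoc]
    _ ≤ ∫⁻ x in dyadic n j m₀, ∑' (k : {k : ℤ // j ≤ k}) (m : Fin n → ℤ),
          a k m * (E k m).indicator (fun _ => (1:ℝ≥0∞)) x := by
        refine lintegral_tsum_mono _
          (fun k m x => ENNReal.ofReal ε * a k m * (dyadic n k m).indicator (fun _ => (1:ℝ≥0∞)) x)
          (fun k m x => a k m * (E k m).indicator (fun _ => (1:ℝ≥0∞)) x)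
          (fun k m => (hi k m).const_mul _)
          (fun k m => (measurable_indicator_one (hE k m).2.1).const_mul _) fun k m hk => ?_
        obtain ⟨hs, hmE, hv⟩ := hE k m
        rw [setLIntegral_mul_indicator (measurableSet_dyadic n k m),
          setLIntegral_mul_indicator hmE, setLIntegral_const, setLIntegral_const]
        rcases dyadic_nested hk m₀ m with h | h
        · rw [Set.inter_eq_left.2 h, Set.inter_eq_left.2 (hs.trans h), mul_comm (ENNReal.ofReal ε),
            mul_assoc]
          gcongr
        · simp [h]
    _ ≤ ∫⁻ x in dyadic n j m₀, M := by
        refine lintegral_mono_ae ((ae_restrict_of_ae hM).mono fun x hx => ?_)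
        exact (ENNReal.tsum_comp_le_tsum_of_injective Subtype.val_injective
          fun k => ∑' m : Fin n → ℤ, a k m * (E k m).indicator (fun _ => (1:ℝ≥0∞)) x).trans hx
    _ = M * volume (dyadic n j m₀) := setLIntegral_const _ _

/-- A sum whose nonzero terms all sit at indices with tail at most `B` is itself at most `B`:
a finite partial sum is dominated by the tail at its smallest contributing index. -/
lemma tsum_le_of_tail_le {g h : ℤ → ℝ≥0∞} {B : ℝ≥0∞} (hhg : ∀ k, h k ≤ g k)
    (hB : ∀ k, h k ≠ 0 → ∑' l : {l : ℤ // k ≤ l}, g l ≤ B) : ∑' k, h k ≤ B := by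
  rw [ENNReal.tsum_eq_iSup_sum]
  refine iSup_le fun s => ?_
  rw [← Finset.sum_filter_ne_zero]
  rcases (s.filter fun k => h k ≠ 0).eq_empty_or_nonempty with he | hne
  · simp [he]
  set s' := s.filter fun k => h k ≠ 0
  have hk := Finset.mem_filter.1 (s'.min'_mem hne)
  refine le_trans ?_ (hB _ hk.2)
  rw [← Finset.sum_subtype_of_mem (p := fun l => s'.min' hne ≤ l) h fun x hx => s'.min'_le x hx]
  exact (Finset.sum_le_sum fun i _ => hhg i.1).trans
    (ENNReal.sum_le_tsum (f := fun l : {l : ℤ // s'.min' hne ≤ l} => g l) _)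

/-- The part of the cube `Q_{k,m}` on which the tail is at most `B`. -/
def lowSet {n : ℕ} (a : ℤ → (Fin n → ℤ) → ℝ≥0∞) (B : ℝ≥0∞) (k : ℤ) (m : Fin n → ℤ) :
    Set (Rn n) := dyadic n k m ∩ {x | tail a k x ≤ B}

/-- The points of `lowSet a B k m` see only generations whose tail is at most `B`, so the sum over
all generations is bounded by `B` at every point. -/
lemma tsum_lowSet_le {n : ℕ} (a : ℤ → (Fin n → ℤ) → ℝ≥0∞) (B : ℝ≥0∞) (x : Rn n) :
    ∑' (k : ℤ) (m : Fin n → ℤ), a k m * (lowSet a B k m).indicator (fun _ => (1:ℝ≥0∞)) x ≤ B := by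
  refine tsum_le_of_tail_le
    (g := fun k => ∑' m : Fin n → ℤ, a k m * (dyadic n k m).indicator (fun _ => (1:ℝ≥0∞)) x)
    (fun k => ENNReal.tsum_le_tsum fun m => ?_) fun k hk => ?_
  · gcongr
    exact Set.inter_subset_left
  · change tail a k x ≤ B
    by_contra hx
    exact hk (ENNReal.tsum_eq_zero.2 fun m => by simp [lowSet, hx])

/-- Chebyshev's inequality: the tail exceeds `2(1-ε)⁻¹` times the bound on its mean only on a set of
relative measure at most `(1-ε)/2 < 1-ε`. -/
lemma goodSets_lowSet {n : ℕ} {ε : ℝ} (hε : 0 < ε) (hε1 : ε < 1) (a : ℤ → (Fin n → ℤ) → ℝ≥0∞)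
    {N : ℝ≥0∞} (hNtop : N ≠ ∞)
    (hN : ∀ j m₀, ∫⁻ x in dyadic n j m₀, tail a j x ≤ N * volume (dyadic n j m₀)) :
    GoodSets n ε (lowSet a (ENNReal.ofReal (2 / (1 - ε)) * N)) := by
  intro k m
  set K := ENNReal.ofReal (2 / (1 - ε)) with hK
  set P := dyadic n k m with hP
  have hPm : MeasurableSet P := measurableSet_dyadic n k m
  have hm : MeasurableSet (lowSet a (K * N) k m) :=
    hPm.inter (measurableSet_le (measurable_tail a k) measurable_const)
  refine ⟨Set.inter_subset_left, hm, ?_⟩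
  have h1ε : 0 < 1 - ε := by linarith
  have hP0 : volume P ≠ 0 := volume_dyadic_ne_zero n k m
  have hPt : volume P ≠ ∞ := volume_dyadic_ne_top n k m
  have hbad : volume (P \ lowSet a (K * N) k m) ≤ ENNReal.ofReal ((1 - ε) / 2) * volume P := by
    have hset : volume (P \ lowSet a (K * N) k m) =
        volume.restrict P {x | K * N < tail a k x} := by
      rw [Measure.restrict_apply (measurableSet_lt measurable_const (measurable_tail a k))]
      congr 1
      ext x
      simp only [lowSet, Set.mem_sdiff, Set.mem_inter_iff, Set.mem_ofPred_eq, not_and, not_le, ← hP]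
      tauto
    rw [hset]
    -- For `N = 0` dividing by `N` is impossible, but then the tail vanishes almost everywhere.
    rcases eq_or_ne N 0 with h0 | h0
    · have h := hN k m
      rw [h0, zero_mul, nonpos_iff_eq_zero, lintegral_eq_zero_iff (measurable_tail a k)] at h
      have : volume.restrict P {x | K * N < tail a k x} = 0 := by
        refine measure_mono_null (fun x hx => ?_) h
        simp only [Set.mem_ofPred_eq, h0, mul_zero] at hx
        exact hx.ne'
      rw [this]; exact zero_le
    · have hch := (mul_meas_ge_le_lintegral (μ := volume.restrict P) (measurable_tail a k)
        (K * N)).trans (hN k m)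
      have hsub : volume.restrict P {x | K * N < tail a k x} ≤
          volume.restrict P {x | K * N ≤ tail a k x} :=
        measure_mono fun x hx => by
          simp only [Set.mem_ofPred_eq] at hx ⊢
          exact hx.le
      have h2 : K * volume.restrict P {x | K * N ≤ tail a k x} ≤ volume P := by
        rw [mul_comm K N, mul_assoc] at hch
        rw [mul_comm K N]
        exact (ENNReal.mul_le_mul_iff_right h0 hNtop).1 hch
      calc volume.restrict P {x | K * N < tail a k x}
          ≤ volume.restrict P {x | K * N ≤ tail a k x} := hsub
        _ = ENNReal.ofReal ((1 - ε) / 2) * (K * volume.restrict P {x | K * N ≤ tail a k x}) := by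
            rw [← mul_assoc, hK, ← ENNReal.ofReal_mul (by positivity),
              show (1 - ε) / 2 * (2 / (1 - ε)) = 1 by field_simp, ENNReal.ofReal_one, one_mul]
        _ ≤ _ := by gcongr
  by_contra hlt
  have hsum : volume P = volume (lowSet a (K * N) k m) + volume (P \ lowSet a (K * N) k m) := by
    have hsub : lowSet a (K * N) k m ⊆ P := Set.inter_subset_left
    rw [measure_add_sdiff hm.nullMeasurableSet, Set.union_eq_self_of_subset_left hsub]
  have : volume P ≤ ENNReal.ofReal ((1 + ε) / 2) * volume P := by
    calc volume P ≤ ENNReal.ofReal ε * volume P + ENNReal.ofReal ((1 - ε) / 2) * volume P := by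
          exact hsum.trans_le (add_le_add (not_lt.1 hlt) hbad)
      _ = _ := by
          rw [← add_mul, ← ENNReal.ofReal_add hε.le (by linarith)]
          congr 2; ring
  have hlt1 : ENNReal.ofReal ((1 + ε) / 2) * volume P < 1 * volume P :=
    (ENNReal.mul_lt_mul_iff_left hP0 hPt).2 (ENNReal.ofReal_lt_one.2 (by linarith))
  rw [one_mul] at hlt1
  exact absurd this (not_le.2 hlt1)

lemma eNormOf_eq {n : ℕ} (q : ℝ) (t : ℤ → Rn n → ℝ≥0∞) (E : ℤ → (Fin n → ℤ) → Set (Rn n))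
    (lam : ℤ → (Fin n → ℤ) → ℂ) :
    eNormOf n q t E lam = essSup (fun x => (∑' (k : ℤ) (m : Fin n → ℤ), coef n q t lam k m *
      (E k m).indicator (fun _ => (1:ℝ≥0∞)) x) ^ (1 / q)) volume := rfl

lemma fInftyNorm_le {n : ℕ} {q ε : ℝ} (hq : 0 < q) (t : ℤ → Rn n → ℝ≥0∞)
    (ht : ∀ k, Measurable (t k)) (lam : ℤ → (Fin n → ℤ) → ℂ)
    {E : ℤ → (Fin n → ℤ) → Set (Rn n)} (hE : GoodSets n ε E) :
    ENNReal.ofReal ε ^ (1 / q) * fInftyNorm n q t lam ≤ eNormOf n q t E lam := by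
  have hq' : 0 ≤ 1 / q := by positivity
  have hM : ∀ᵐ x : Rn n, ∑' (k : ℤ) (m : Fin n → ℤ), coef n q t lam k m *
      (E k m).indicator (fun _ => (1:ℝ≥0∞)) x ≤ eNormOf n q t E lam ^ q := by
    rw [eNormOf_eq]
    refine (ENNReal.ae_le_essSup fun x => (∑' (k : ℤ) (m : Fin n → ℤ),
      coef n q t lam k m * (E k m).indicator (fun _ => (1:ℝ≥0∞)) x) ^ (1 / q)).mono fun x hx => ?_
    have := ENNReal.rpow_le_rpow hx hq.le
    rwa [← ENNReal.rpow_mul, one_div_mul_cancel hq.ne', ENNReal.rpow_one] at this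
  rw [fInftyNorm_eq hq t ht]
  simp only [ENNReal.mul_iSup]
  refine iSup_le fun j => iSup_le fun m₀ => ?_
  have h := eps_mul_lintegral_tail_le _ hE hM j m₀
  have h0 := volume_dyadic_ne_zero n j m₀
  have h1 := volume_dyadic_ne_top n j m₀
  rw [← ENNReal.mul_rpow_of_nonneg _ _ hq', ← ENNReal.le_rpow_inv_iff (by positivity), one_div,
    inv_inv]
  calc _ = (volume (dyadic n j m₀))⁻¹ *
        (ENNReal.ofReal ε * ∫⁻ x in dyadic n j m₀, tail (coef n q t lam) j x) := by ring
    _ ≤ (volume (dyadic n j m₀))⁻¹ * (eNormOf n q t E lam ^ q * volume (dyadic n j m₀)) := by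
        gcongr
    _ = _ := by
        rw [mul_comm, mul_assoc, ENNReal.mul_inv_cancel h0 h1, mul_one]

lemma exists_goodSets {n : ℕ} {q ε : ℝ} (hq : 0 < q) (hε : 0 < ε) (hε1 : ε < 1)
    (t : ℤ → Rn n → ℝ≥0∞) (ht : ∀ k, Measurable (t k)) (lam : ℤ → (Fin n → ℤ) → ℂ)
    (hfin : fInftyNorm n q t lam < ∞) :
    ∃ E, GoodSets n ε E ∧
      eNormOf n q t E lam ≤ ENNReal.ofReal (2 / (1 - ε)) ^ (1 / q) * fInftyNorm n q t lam := by
  set F := fInftyNorm n q t lam with hF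
  have hq' : 0 ≤ 1 / q := by positivity
  have hFq : (F ^ q) ^ (1 / q) = F := by
    rw [← ENNReal.rpow_mul, mul_one_div_cancel hq.ne', ENNReal.rpow_one]
  refine ⟨lowSet (coef n q t lam) (ENNReal.ofReal (2 / (1 - ε)) * F ^ q),
    goodSets_lowSet hε hε1 _ (ENNReal.rpow_ne_top_of_nonneg hq.le hfin.ne) fun j m₀ => ?_, ?_⟩
  · have h : ((volume (dyadic n j m₀))⁻¹ *
        ∫⁻ x in dyadic n j m₀, tail (coef n q t lam) j x) ^ (1 / q) ≤ F := by
      rw [hF, fInftyNorm_eq hq t ht]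
      exact le_iSup₂_of_le j m₀ le_rfl
    have h2 := ENNReal.rpow_le_rpow h hq.le
    rw [← ENNReal.rpow_mul, one_div_mul_cancel hq.ne', ENNReal.rpow_one] at h2
    rw [mul_comm]
    exact (ENNReal.inv_mul_le_iff (volume_dyadic_ne_zero n j m₀)
      (volume_dyadic_ne_top n j m₀)).1 h2
  · rw [eNormOf_eq]
    refine essSup_le_of_ae_le _ (Filter.Eventually.of_forall fun x => ?_)
    rw [← hFq, ← ENNReal.mul_rpow_of_nonneg _ _ hq', hFq]
    exact ENNReal.rpow_le_rpow (tsum_lowSet_le _ _ x) hq'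

/-- **Proposition (subset characterization of `ḟ_{∞,q}`).** Let `0 < θ ≤ q < ∞`, let `{t_k}` be a
`q`-admissible weight sequence satisfying `M_{Q,q}(t_k)·M_{Q,σ₁}(t_k^{-1}) ≤ C` with
`σ₁ = θ(q/θ)′`, and fix `0 < ε < 1`. Then `λ ∈ ḟ_{∞,q}` iff for each dyadic cube there is a
subset of relative measure `> ε` making the `L_∞`-expression finite; moreover the infimum of
this expression over all such collections is equivalent to `‖λ | ḟ_{∞,q}(ℝ^n,{t_k})‖`. -/
theorem stmt8 (n : ℕ) (θ q ε : ℝ) (hθ : 0 < θ) (hθq : θ ≤ q) (hε : 0 < ε) (hε1 : ε < 1)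
    (t : ℤ → Rn n → ℝ≥0∞) (ht : PAdmissible n (ENNReal.ofReal q) t)
    (hA : ∃ C : ℝ≥0∞, 0 < C ∧ C < ∞ ∧ ∀ (k : ℤ) (a : Rn n) (h : ℝ), 0 < h →
      avgE (cube a h) (ENNReal.ofReal q) (t k) *
        avgE (cube a h) (ENNReal.ofReal θ * econj (ENNReal.ofReal q / ENNReal.ofReal θ))
          (fun x => (t k x)⁻¹) ≤ C) :
    ∃ c₁ c₂ : ℝ≥0∞, 0 < c₁ ∧ c₁ < ∞ ∧ 0 < c₂ ∧ c₂ < ∞ ∧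
      ∀ lam : ℤ → (Fin n → ℤ) → ℂ,
        (fInftyNorm n q t lam < ∞ ↔
          ∃ E : ℤ → (Fin n → ℤ) → Set (Rn n), GoodSets n ε E ∧ eNormOf n q t E lam < ∞) ∧
        c₁ * fInftyNorm n q t lam ≤
          (⨅ (E : ℤ → (Fin n → ℤ) → Set (Rn n)) (_ : GoodSets n ε E), eNormOf n q t E lam) ∧
        (⨅ (E : ℤ → (Fin n → ℤ) → Set (Rn n)) (_ : GoodSets n ε E), eNormOf n q t E lam) ≤
          c₂ * fInftyNorm n q t lam := by
  have hq : 0 < q := hθ.trans_le hθq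
  have hq' : 0 ≤ 1 / q := by positivity
  have hm : ∀ k, Measurable (t k) := fun k => (ht.1 k).1
  have hp1 : 0 < ENNReal.ofReal ε := ENNReal.ofReal_pos.2 hε
  have hp2 : 0 < ENNReal.ofReal (2 / (1 - ε)) :=
    ENNReal.ofReal_pos.2 (div_pos two_pos (by linarith))
  have hc1 : 0 < ENNReal.ofReal ε ^ (1 / q) := ENNReal.rpow_pos hp1 ENNReal.ofReal_ne_top
  have hc2 : 0 < ENNReal.ofReal (2 / (1 - ε)) ^ (1 / q) :=
    ENNReal.rpow_pos hp2 ENNReal.ofReal_ne_top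
  have hc2t : ENNReal.ofReal (2 / (1 - ε)) ^ (1 / q) < ∞ :=
    ENNReal.rpow_lt_top_of_nonneg hq' ENNReal.ofReal_ne_top
  refine ⟨ENNReal.ofReal ε ^ (1 / q), ENNReal.ofReal (2 / (1 - ε)) ^ (1 / q), hc1,
    ENNReal.rpow_lt_top_of_nonneg hq' ENNReal.ofReal_ne_top, hc2, hc2t, fun lam => ⟨⟨fun h => ?_,
      ?_⟩, le_iInf₂ fun E hE => fInftyNorm_le hq t hm lam hE, ?_⟩⟩
  · obtain ⟨E, hE, hle⟩ := exists_goodSets hq hε hε1 t hm lam h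
    exact ⟨E, hE, hle.trans_lt (ENNReal.mul_lt_top hc2t h)⟩
  · rintro ⟨E, hE, hlt⟩
    have h := (fInftyNorm_le hq t hm lam hE).trans_lt hlt
    by_contra htop
    rw [not_lt, top_le_iff] at htop
    rw [htop, ENNReal.mul_top hc1.ne'] at h
    exact lt_irrefl _ h
  · rcases eq_or_ne (fInftyNorm n q t lam) ∞ with h | h
    · rw [h, ENNReal.mul_top hc2.ne']
      exact le_top
    · obtain ⟨E, hE, hle⟩ := exists_goodSets hq hε hε1 t hm lam h.lt_top
      exact (iInf₂_le E hE).trans hle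

end
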